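/- arXiv:2510.21016 — 2 statements merged into one kernel-verified Lean document; each statement's English description precedes it below -/
import Mathlib

section
/- Let n ≥ 1, let c ∈ ℝ and c < b ≤ +∞, and let B : [c,b) → ℂ^{2n×2n} be continuous with B(x) Hermitian for every x. Let u₁, …, u_d : [c,b) → ℂ^{2n} be continuously differentiable solutions of J u' = B(x) u such that lim_{x→b⁻} u_j(x)* J u_k(x) = 0 for all j, k ∈ {1,…,d}. Then: (i) u_j(x)* J u_k(x) = 0 for every x ∈ [c,b) and all j, k; (ii) if the vectors u₁(c), …, u_d(c) are linearly independent, then d ≤ n; (iii) if d = n and u₁(c), …, u_n(c) are linearly independent, then for every x ∈ [c,b) the vectors u₁(x), …, u_n(x) are linearly independent and span a Lagrangian subspace of ℂ^{2n}. -/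
open Matrix

/-- The standard `2n × 2n` complex symplectic matrix `J = [[0, -Iₙ],[Iₙ, 0]]`,
with `ℂ^{2n}` realized as functions on `Fin n ⊕ Fin n`. -/
noncomputable def symJ (n : ℕ) : Matrix (Fin n ⊕ Fin n) (Fin n ⊕ Fin n) ℂ :=
  Matrix.fromBlocks 0 (-1) 1 0

theorem symJ_conjTranspose (n : ℕ) : (symJ n)ᴴ = -symJ n := by
  simp [symJ, Matrix.fromBlocks_conjTranspose, Matrix.fromBlocks_neg]

theorem symJ_mul_symJ (n : ℕ) : symJ n * symJ n = -1 := by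
  rw [symJ, Matrix.fromBlocks_multiply]
  simp [← Matrix.fromBlocks_one, Matrix.fromBlocks_neg]

theorem symJ_mulVec_mulVec (n : ℕ) (v : (Fin n ⊕ Fin n) → ℂ) :
    symJ n *ᵥ (symJ n *ᵥ v) = -v := by
  rw [Matrix.mulVec_mulVec, symJ_mul_symJ, Matrix.neg_mulVec, Matrix.one_mulVec]

theorem star_mulVec_dot {m : Type*} [Fintype m] (A : Matrix m m ℂ) (v w : m → ℂ) :
    star (A *ᵥ v) ⬝ᵥ w = star v ⬝ᵥ (Aᴴ *ᵥ w) := by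
  rw [Matrix.star_mulVec, Matrix.dotProduct_mulVec]

theorem dot_hasDerivWithinAt {m : Type*} [Fintype m] {D : Set ℝ} {x : ℝ}
    {f g : ℝ → m → ℂ} {f' g' : m → ℂ} (A : Matrix m m ℂ)
    (hf : HasDerivWithinAt f f' D x) (hg : HasDerivWithinAt g g' D x) :
    HasDerivWithinAt (fun y => star (f y) ⬝ᵥ (A *ᵥ g y))
      (star f' ⬝ᵥ (A *ᵥ g x) + star (f x) ⬝ᵥ (A *ᵥ g')) D x := by
  rw [hasDerivWithinAt_pi] at hf hg
  have h1 : ∀ i, HasDerivWithinAt (fun y => (A *ᵥ g y) i) ((A *ᵥ g') i) D x := by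
    intro i
    simp only [Matrix.mulVec, dotProduct]
    exact HasDerivWithinAt.fun_sum fun j _ => (hg j).const_mul (A i j)
  simp only [dotProduct, ← Finset.sum_add_distrib]
  exact HasDerivWithinAt.fun_sum fun j _ => ((hf j).star).mul (h1 j)

theorem pairing_span {m ι : Type*} [Fintype m] (A : Matrix m m ℂ) (e : ι → m → ℂ)
    (h : ∀ j k, star (e j) ⬝ᵥ (A *ᵥ e k) = 0) :
    ∀ v ∈ Submodule.span ℂ (Set.range e), ∀ w ∈ Submodule.span ℂ (Set.range e),
      star v ⬝ᵥ (A *ᵥ w) = 0 := by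
  intro v hv w hw
  induction hv using Submodule.span_induction with
  | mem v hv =>
    obtain ⟨j, rfl⟩ := hv
    induction hw using Submodule.span_induction with
    | mem w hw => obtain ⟨k, rfl⟩ := hw; exact h j k
    | zero => simp
    | add a b _ _ ha hb => rw [Matrix.mulVec_add, dotProduct_add, ha, hb, add_zero]
    | smul t a _ ha => rw [Matrix.mulVec_smul, dotProduct_smul, ha, smul_zero]
  | zero => simp
  | add a b _ _ ha hb => rw [star_add, add_dotProduct, ha, hb, add_zero]
  | smul t a _ ha => rw [star_smul, smul_dotProduct, ha, smul_zero]

theorem isotropic_card_le (n d : ℕ) (e : Fin d → (Fin n ⊕ Fin n) → ℂ)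
    (h : ∀ j k, star (e j) ⬝ᵥ (symJ n *ᵥ e k) = 0) (hli : LinearIndependent ℂ e) : d ≤ n := by
  have hsp := pairing_span (symJ n) e h
  set W := Submodule.span ℂ (Set.range e) with hW
  have hfr : Module.finrank ℂ W = d := by
    simpa using finrank_span_eq_card hli
  let L : (W × W) →ₗ[ℂ] ((Fin n ⊕ Fin n) → ℂ) :=
    W.subtype.coprod ((Matrix.mulVecLin (symJ n)).comp W.subtype)
  have hL : Function.Injective L := by
    rw [← LinearMap.ker_eq_bot, LinearMap.ker_eq_bot']
    rintro ⟨v, w⟩ hvw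
    have hvw' : (v : (Fin n ⊕ Fin n) → ℂ) + symJ n *ᵥ (w : (Fin n ⊕ Fin n) → ℂ) = 0 := by
      simpa [L] using hvw
    have h0 := hsp v v.2 w w.2
    have hv : (v : (Fin n ⊕ Fin n) → ℂ) = 0 := by
      have := congrArg (fun z => star (v : (Fin n ⊕ Fin n) → ℂ) ⬝ᵥ z) hvw'
      simp only [dotProduct_add, h0, add_zero, dotProduct_zero] at this
      open scoped ComplexOrder in
      exact dotProduct_star_self_eq_zero.1 this
    have hw : (w : (Fin n ⊕ Fin n) → ℂ) = 0 := by
      rw [hv, zero_add] at hvw'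
      have := symJ_mulVec_mulVec n w
      rw [hvw', Matrix.mulVec_zero] at this
      exact neg_eq_zero.1 this.symm
    ext1
    · exact Subtype.ext hv
    · exact Subtype.ext hw
  have := LinearMap.finrank_le_finrank_of_injective hL
  rw [Module.finrank_prod, hfr, Module.finrank_fintype_fun_eq_card] at this
  simp at this
  omega

section
attribute [local instance] Matrix.linftyOpNormedAddCommGroup

theorem linear_ode_zero {m : Type*} [Fintype m] {a b : ℝ} (hab : a ≤ b) (A : ℝ → Matrix m m ℂ)
    (hA : ContinuousOn A (Set.Icc a b)) (f : ℝ → m → ℂ)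
    (hf : ∀ t ∈ Set.Icc a b, HasDerivWithinAt f (A t *ᵥ f t) (Set.Icc a b) t)
    (hb : f b = 0) : f a = 0 := by
  obtain ⟨C, hC⟩ := isCompact_Icc.exists_bound_of_continuousOn hA
  have key := ODE_solution_unique_of_mem_Icc_left (K := C.toNNReal) (s := fun _ => Set.univ)
    (v := fun t z => A t *ᵥ z) (f := f) (g := fun _ => 0) (a := a) (b := b) ?_ ?_ ?_ ?_ ?_ ?_ ?_ hb
  · exact key (Set.left_mem_Icc.2 hab)
  · intro t ht
    refine LipschitzOnWith.of_dist_le_mul fun x _ y _ => ?_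
    rw [dist_eq_norm, dist_eq_norm, ← Matrix.mulVec_sub]
    refine (Matrix.linfty_opNorm_mulVec _ _).trans ?_
    gcongr
    exact (hC t ⟨ht.1.le, ht.2⟩).trans (Real.le_coe_toNNReal C)
  · exact fun t ht => (hf t ht).continuousWithinAt
  · intro t ht
    refine ((hf t ⟨ht.1.le, ht.2⟩).mono_of_mem_nhdsWithin ?_)
    exact Filter.mem_of_superset (Icc_mem_nhdsLE ht.1) (Set.Icc_subset_Icc_right ht.2)
  · exact fun _ _ => Set.mem_univ _
  · exact continuousOn_const
  · intro t ht
    simpa using hasDerivWithinAt_const t (Set.Iic t) (0 : m → ℂ)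
  · exact fun _ _ => Set.mem_univ _

end

/-- Solutions of `J u' = B(x) u` on `[c, b)` (with `b ≤ +∞`, encoded as `b : EReal`)
whose mutual symplectic pairings vanish in the limit `x → b⁻` have identically vanishing
pairings; at most `n` of them can be linearly independent, and `n` linearly independent
such solutions span a Lagrangian subspace of `ℂ^{2n}` at every `x`. -/
theorem limiting_lagrangian_solutions
    (n d : ℕ) (hn : 1 ≤ n) (c : ℝ) (b : EReal) (hcb : (c : EReal) < b)
    (D : Set ℝ) (hD : D = {x : ℝ | c ≤ x ∧ (x : EReal) < b})
    (B : ℝ → Matrix (Fin n ⊕ Fin n) (Fin n ⊕ Fin n) ℂ)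
    (u u' : Fin d → ℝ → (Fin n ⊕ Fin n) → ℂ)
    (hBcont : ∀ i j, ContinuousOn (fun x => B x i j) D)
    (hBherm : ∀ x ∈ D, (B x).IsHermitian)
    (hu : ∀ j, ∀ x ∈ D, HasDerivWithinAt (u j) (u' j x) D x)
    (hu'cont : ∀ j, ContinuousOn (u' j) D)
    (hode : ∀ j, ∀ x ∈ D, symJ n *ᵥ u' j x = B x *ᵥ u j x)
    (hlim : ∀ j k, Filter.Tendsto (fun x => star (u j x) ⬝ᵥ (symJ n *ᵥ u k x))
        (Filter.comap (fun x : ℝ => (x : EReal)) (nhdsWithin b (Set.Iio b))) (nhds 0)) :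
    (∀ x ∈ D, ∀ j k, star (u j x) ⬝ᵥ (symJ n *ᵥ u k x) = 0)
    ∧ (LinearIndependent ℂ (fun j => u j c) → d ≤ n)
    ∧ (d = n → LinearIndependent ℂ (fun j => u j c) →
        ∀ x ∈ D, LinearIndependent ℂ (fun j => u j x)
          ∧ Module.finrank ℂ (Submodule.span ℂ (Set.range (fun j => u j x))) = n
          ∧ ∀ v ∈ Submodule.span ℂ (Set.range (fun j => u j x)),
              ∀ w ∈ Submodule.span ℂ (Set.range (fun j => u j x)),
                star v ⬝ᵥ (symJ n *ᵥ w) = 0) := by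
  have hconv : Convex ℝ D := by
    apply Set.OrdConnected.convex
    rw [hD]
    refine ⟨fun x hx y hy z hz => ⟨hx.1.trans hz.1, ?_⟩⟩
    exact lt_of_le_of_lt (EReal.coe_le_coe_iff.2 hz.2) hy.2
  have hcD : c ∈ D := by rw [hD]; exact ⟨le_rfl, hcb⟩
  have h1 : ∀ x ∈ D, ∀ j k, star (u j x) ⬝ᵥ (symJ n *ᵥ u k x) = 0 := by
    intro x hx j k
    have hder : ∀ y ∈ D, HasDerivWithinAt
        (fun y => star (u j y) ⬝ᵥ (symJ n *ᵥ u k y)) ((fun _ => (0 : ℂ)) y) D y := by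
      intro y hy
      have := dot_hasDerivWithinAt (symJ n) (hu j y hy) (hu k y hy)
      convert this using 1
      have e1 : star (u' j y) ⬝ᵥ (symJ n *ᵥ u k y) = -(star (symJ n *ᵥ u' j y) ⬝ᵥ u k y) := by
        rw [star_mulVec_dot, symJ_conjTranspose, Matrix.neg_mulVec, dotProduct_neg, neg_neg]
      rw [e1, hode j y hy, hode k y hy, star_mulVec_dot, (hBherm y hy).eq, neg_add_cancel]
    have hconst : ∀ y ∈ D, star (u j y) ⬝ᵥ (symJ n *ᵥ u k y)
        = star (u j x) ⬝ᵥ (symJ n *ᵥ u k x) := by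
      intro y hy
      have := Convex.norm_image_sub_le_of_norm_hasDerivWithin_le (C := 0) hder
        (fun _ _ => by simp) hconv hx hy
      rw [zero_mul] at this
      exact sub_eq_zero.1 (norm_le_zero_iff.1 this)
    have hev : ∀ᶠ y in Filter.comap (fun x : ℝ => (x : EReal)) (nhdsWithin b (Set.Iio b)),
        y ∈ D := by
      rw [hD]
      refine Filter.eventually_comap.2 ?_
      filter_upwards [Ioo_mem_nhdsLT hcb] with z hz y hy
      subst hy
      exact ⟨(EReal.coe_lt_coe_iff.1 hz.1).le, hz.2⟩
    have hne : (Filter.comap (fun x : ℝ => (x : EReal)) (nhdsWithin b (Set.Iio b))).NeBot := by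
      rw [Filter.comap_neBot_iff]
      intro t ht
      obtain ⟨l, hl, hlt⟩ := (mem_nhdsLT_iff_exists_Ioo_subset' hcb).1 ht
      obtain ⟨r, hr1, hr2⟩ := EReal.lt_iff_exists_real_btwn.1 hl
      exact ⟨r, hlt ⟨hr1, hr2⟩⟩
    have ht : Filter.Tendsto (fun x => star (u j x) ⬝ᵥ (symJ n *ᵥ u k x))
        (Filter.comap (fun x : ℝ => (x : EReal)) (nhdsWithin b (Set.Iio b)))
        (nhds (star (u j x) ⬝ᵥ (symJ n *ᵥ u k x))) := by
      refine tendsto_const_nhds.congr' ?_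
      filter_upwards [hev] with y hy
      exact (hconst y hy).symm
    exact tendsto_nhds_unique ht (hlim j k)
  refine ⟨h1, fun hli => isotropic_card_le n d _ (h1 c hcD) hli, ?_⟩
  intro hdn hli x hx
  have hcx : c ≤ x := by rw [hD] at hx; exact hx.1
  have hsub : Set.Icc c x ⊆ D := hconv.ordConnected.out hcD hx
  have hlix : LinearIndependent ℂ (fun j => u j x) := by
    rw [Fintype.linearIndependent_iff] at hli ⊢
    intro g hg
    apply hli g
    have hode' : ∀ j, ∀ y ∈ D, u' j y = (-(symJ n * B y)) *ᵥ u j y := by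
      intro j y hy
      rw [Matrix.neg_mulVec, ← Matrix.mulVec_mulVec, ← hode j y hy, symJ_mulVec_mulVec, neg_neg]
    refine linear_ode_zero hcx (fun y => -(symJ n * B y)) ?_ (fun y => ∑ j, g j • u j y) ?_ hg
    · have hB : ContinuousOn B (Set.Icc c x) :=
        continuousOn_pi.2 fun i => continuousOn_pi.2 fun j => (hBcont i j).mono hsub
      exact (continuousOn_const.mul hB).neg
    · intro t ht
      rw [Matrix.mulVec_sum]
      refine HasDerivWithinAt.fun_sum fun j _ => ?_
      rw [Matrix.mulVec_smul, ← hode' j t (hsub ht)]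
      exact ((hu j t (hsub ht)).mono hsub).const_smul (g j)
  refine ⟨hlix, ?_, pairing_span _ _ (h1 x hx)⟩
  rw [finrank_span_eq_card hlix, Fintype.card_fin, hdn]
end

section
/- Let n, m ≥ 1, let c ∈ ℝ and c < b ≤ +∞, and let B, B₁ : [c,b) → ℂ^{2n×2n} be continuous with B(x) and B₁(x) Hermitian for every x. Suppose X, Y : [c,b) → ℂ^{2n×m} are continuously differentiable and satisfy J X'(x) = B(x) X(x) and J Y'(x) = B₁(x) X(x) + B(x) Y(x) on [c,b), that lim_{x→b⁻} X(x)* J Y(x) = 0, and that the improper integral ∫_c^b X(ξ)* B₁(ξ) X(ξ) dξ converges. Then X(c)* J Y(c) = − ∫_c^b X(ξ)* B₁(ξ) X(ξ) dξ. If in addition B₁(ξ) is positive semidefinite for every ξ and for every nonzero v ∈ ℂ^m one has ∫_c^b (X(ξ)v)* B₁(ξ) (X(ξ)v) dξ > 0, then the Hermitian matrix X(c)* J Y(c) is negative definite. -/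
open Matrix MeasureTheory
open scoped ComplexOrder

lemma hasDeriv_mul_aux {p q r : Type*} [Fintype q] {D : Set ℝ} {x : ℝ}
    {A : ℝ → Matrix p q ℂ} {C : ℝ → Matrix q r ℂ} {A' : Matrix p q ℂ} {C' : Matrix q r ℂ}
    (hA : ∀ i j, HasDerivWithinAt (fun t => A t i j) (A' i j) D x)
    (hC : ∀ i j, HasDerivWithinAt (fun t => C t i j) (C' i j) D x) (i : p) (j : r) :
    HasDerivWithinAt (fun t => (A t * C t) i j) ((A' * C x + A x * C') i j) D x := by
  simp only [Matrix.mul_apply, Matrix.add_apply, ← Finset.sum_add_distrib]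
  exact HasDerivWithinAt.fun_sum fun k _ => (hA i k).fun_mul (hC k j)

lemma cont_mul_aux {p q r : Type*} [Fintype q] {D : Set ℝ}
    {A : ℝ → Matrix p q ℂ} {C : ℝ → Matrix q r ℂ}
    (hA : ∀ i j, ContinuousOn (fun t => A t i j) D)
    (hC : ∀ i j, ContinuousOn (fun t => C t i j) D) (i : p) (j : r) :
    ContinuousOn (fun t => (A t * C t) i j) D := by
  simp only [Matrix.mul_apply]
  exact continuousOn_finsetSum _ fun k _ => (hA i k).mul (hC k j)

lemma symJ_conjT (n : ℕ) : (symJ n)ᴴ = - symJ n := by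
  simp [symJ, Matrix.fromBlocks_conjTranspose, Matrix.fromBlocks_neg]

lemma lb_neBot_aux (c : ℝ) (b : EReal) (hcb : (c : EReal) < b) :
    (Filter.comap (fun x : ℝ => (x : EReal)) (nhdsWithin b (Set.Iio b))).NeBot := by
  rw [Filter.comap_neBot_iff]
  intro t ht
  rw [mem_nhdsLT_iff_exists_Ioo_subset' hcb] at ht
  obtain ⟨l, hl, hs⟩ := ht
  obtain ⟨x, h1, h2⟩ := EReal.lt_iff_exists_real_btwn.1 hl
  exact ⟨x, hs ⟨h1, h2⟩⟩

lemma lb_mem_aux (c : ℝ) (b : EReal) (hcb : (c : EReal) < b) :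
    ∀ᶠ x in Filter.comap (fun x : ℝ => (x : EReal)) (nhdsWithin b (Set.Iio b)),
      c ≤ x ∧ (x : EReal) < b := by
  have : Set.Ioo (c : EReal) b ∈ nhdsWithin b (Set.Iio b) := Ioo_mem_nhdsLT hcb
  filter_upwards [Filter.preimage_mem_comap this] with x hx
  exact ⟨EReal.coe_le_coe_iff.1 hx.1.le, hx.2⟩

/-- If `J X' = B X` and `J Y' = B₁ X + B Y` on `[c, b)` (with `b ≤ +∞` encoded as
`b : EReal`), `X* J Y → 0` at `b⁻`, and the improper integral `∫_c^b X* B₁ X` converges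
(entrywise, to `T`), then `X(c)* J Y(c) = −T`; if moreover `B₁` is positive semidefinite
and all the quadratic integrals `∫_c^b (Xv)* B₁ (Xv)` converge to positive limits, the
Hermitian matrix `X(c)* J Y(c)` is negative definite. -/
theorem singular_endpoint_monotonicity
    (n m : ℕ) (hn : 1 ≤ n) (hm : 1 ≤ m) (c : ℝ) (b : EReal) (hcb : (c : EReal) < b)
    (D : Set ℝ) (hD : D = {x : ℝ | c ≤ x ∧ (x : EReal) < b})
    (lb : Filter ℝ)
    (hlb : lb = Filter.comap (fun x : ℝ => (x : EReal)) (nhdsWithin b (Set.Iio b)))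
    (B B₁ : ℝ → Matrix (Fin n ⊕ Fin n) (Fin n ⊕ Fin n) ℂ)
    (X Y X' Y' : ℝ → Matrix (Fin n ⊕ Fin n) (Fin m) ℂ)
    (T : Matrix (Fin m) (Fin m) ℂ)
    (hBcont : ∀ i j, ContinuousOn (fun x => B x i j) D)
    (hB₁cont : ∀ i j, ContinuousOn (fun x => B₁ x i j) D)
    (hBherm : ∀ x ∈ D, (B x).IsHermitian)
    (hB₁herm : ∀ x ∈ D, (B₁ x).IsHermitian)
    (hX : ∀ x ∈ D, ∀ i j, HasDerivWithinAt (fun t => X t i j) (X' x i j) D x)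
    (hX'cont : ∀ i j, ContinuousOn (fun x => X' x i j) D)
    (hY : ∀ x ∈ D, ∀ i j, HasDerivWithinAt (fun t => Y t i j) (Y' x i j) D x)
    (hY'cont : ∀ i j, ContinuousOn (fun x => Y' x i j) D)
    (hodeX : ∀ x ∈ D, symJ n * X' x = B x * X x)
    (hodeY : ∀ x ∈ D, symJ n * Y' x = B₁ x * X x + B x * Y x)
    (hlim : ∀ i j, Filter.Tendsto (fun x => ((X x)ᴴ * symJ n * Y x) i j) lb (nhds 0))
    (hT : ∀ i j, Filter.Tendsto
        (fun t => ∫ ξ in c..t, ((X ξ)ᴴ * B₁ ξ * X ξ) i j) lb (nhds (T i j))) :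
    (X c)ᴴ * symJ n * Y c = -T
    ∧ ((∀ x ∈ D, (B₁ x).PosSemidef) →
        (∀ v : Fin m → ℂ, v ≠ 0 →
          ∃ L : ℝ, 0 < L ∧
            Filter.Tendsto
              (fun t => ∫ ξ in c..t, (star (X ξ *ᵥ v) ⬝ᵥ (B₁ ξ *ᵥ (X ξ *ᵥ v))).re)
              lb (nhds L)) →
        (-((X c)ᴴ * symJ n * Y c)).PosDef) := by
  have hNe : lb.NeBot := hlb ▸ lb_neBot_aux c b hcb
  have hev : ∀ᶠ x in lb, x ∈ D := by
    rw [hlb, hD]; exact lb_mem_aux c b hcb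
  have hsub : ∀ t ∈ D, Set.Icc c t ⊆ D := by
    intro t ht x hx
    rw [hD] at ht ⊢
    exact ⟨hx.1, lt_of_le_of_lt (by exact_mod_cast hx.2) ht.2⟩
  have hle : ∀ t ∈ D, c ≤ t := by
    intro t ht; rw [hD] at ht; exact ht.1
  have hXc : ∀ i j, ContinuousOn (fun x => X x i j) D :=
    fun i j x hx => (hX x hx i j).continuousWithinAt
  have hXHc : ∀ i j, ContinuousOn (fun x => (X x)ᴴ i j) D :=
    fun i j => (hXc j i).star
  have hMc : ∀ i j, ContinuousOn (fun x => ((X x)ᴴ * B₁ x * X x) i j) D :=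
    cont_mul_aux (cont_mul_aux hXHc hB₁cont) hXc
  have hMint : ∀ i j, ∀ t ∈ D,
      IntervalIntegrable (fun x => ((X x)ᴴ * B₁ x * X x) i j) volume c t := by
    intro i j t ht
    apply ContinuousOn.intervalIntegrable_of_Icc (hle t ht)
    exact (hMc i j).mono (hsub t ht)
  have hFd : ∀ x ∈ D, ∀ i j, HasDerivWithinAt (fun t => ((X t)ᴴ * symJ n * Y t) i j)
      (((X x)ᴴ * B₁ x * X x) i j) D x := by
    intro x hx i j
    have h1 : ∀ i j, HasDerivWithinAt (fun t => (X t)ᴴ i j) ((X' x)ᴴ i j) D x :=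
      fun i j => (hX x hx j i).star
    have h2 : ∀ i j, HasDerivWithinAt (fun _ : ℝ => symJ n i j)
        ((0 : Matrix (Fin n ⊕ Fin n) (Fin n ⊕ Fin n) ℂ) i j) D x :=
      fun i j => hasDerivWithinAt_const _ _ _
    have h3 := hasDeriv_mul_aux (hasDeriv_mul_aux h1 h2) (hY x hx) i j
    convert h3 using 2
    have e1 : (X' x)ᴴ * symJ n = - ((X x)ᴴ * B x) := by
      have := congrArg Matrix.conjTranspose (hodeX x hx)
      rw [Matrix.conjTranspose_mul, Matrix.conjTranspose_mul, symJ_conjT,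
        (hBherm x hx).eq] at this
      rw [← this, Matrix.mul_neg, neg_neg]
    rw [Matrix.mul_zero, add_zero, e1, Matrix.mul_assoc _ (symJ n), hodeY x hx, Matrix.mul_add,
      Matrix.neg_mul]
    simp only [Matrix.mul_assoc]
    simp only [Matrix.add_apply, Matrix.neg_apply]
    ring
  have hFTC : ∀ t ∈ D, ∀ i j, ∫ ξ in c..t, ((X ξ)ᴴ * B₁ ξ * X ξ) i j
      = ((X t)ᴴ * symJ n * Y t) i j - ((X c)ᴴ * symJ n * Y c) i j := by
    intro t ht i j
    apply intervalIntegral.integral_eq_sub_of_hasDerivAt_of_le (hle t ht)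
    · intro x hx
      exact ((hFd x (hsub t ht hx) i j).continuousWithinAt).mono (hsub t ht)
    · intro x hx
      exact (hFd x (hsub t ht (Set.Ioo_subset_Icc_self hx)) i j).hasDerivAt
        (Filter.mem_of_superset (Icc_mem_nhds hx.1 hx.2) (hsub t ht))
    · exact hMint i j t ht
  have hmain : (X c)ᴴ * symJ n * Y c = -T := by
    ext i j
    have h1 : Filter.Tendsto (fun t => ∫ ξ in c..t, ((X ξ)ᴴ * B₁ ξ * X ξ) i j) lb
        (nhds (0 - ((X c)ᴴ * symJ n * Y c) i j)) := by
      refine ((hlim i j).sub_const _).congr' ?_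
      filter_upwards [hev] with t ht
      exact (hFTC t ht i j).symm
    have h2 := tendsto_nhds_unique (hT i j) h1
    rw [Matrix.neg_apply, h2]; ring
  refine ⟨hmain, fun _ hpos => ?_⟩
  rw [hmain, neg_neg]
  have hTH : T.IsHermitian := by
    ext i j
    rw [Matrix.conjTranspose_apply]
    refine tendsto_nhds_unique ((hT j i).star) ((hT i j).congr' ?_)
    filter_upwards [hev] with t ht
    have : star (∫ ξ in c..t, ((X ξ)ᴴ * B₁ ξ * X ξ) j i)
        = ∫ ξ in c..t, star (((X ξ)ᴴ * B₁ ξ * X ξ) j i) := by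
      simp only [intervalIntegral.integral_of_le (hle t ht)]
      exact integral_conj.symm
    rw [this]
    apply intervalIntegral.integral_congr
    intro x hx
    rw [Set.uIcc_of_le (hle t ht)] at hx
    have hh : ((X x)ᴴ * B₁ x * X x).IsHermitian :=
      Matrix.isHermitian_conjTranspose_mul_mul _ (hB₁herm x (hsub t ht hx))
    exact (hh.apply i j).symm
  refine Matrix.PosDef.of_dotProduct_mulVec_pos hTH fun v hv => ?_
  obtain ⟨L, hL, hLt⟩ := hpos v hv
  have him : (star v ⬝ᵥ (T *ᵥ v)).im = 0 := hTH.im_star_dotProduct_mulVec_self v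
  have hre : (star v ⬝ᵥ (T *ᵥ v)).re = L := by
    have h1 : Filter.Tendsto (fun t => (∑ i, star (v i) * ∑ j,
        (∫ ξ in c..t, ((X ξ)ᴴ * B₁ ξ * X ξ) i j) * v j).re) lb
        (nhds (∑ i, star (v i) * ∑ j, T i j * v j).re) :=
      (Complex.continuous_re.tendsto _).comp <| tendsto_finsetSum _ fun i _ =>
        (tendsto_finsetSum _ fun j _ => (hT i j).mul_const _).const_mul _
    refine tendsto_nhds_unique h1 (hLt.congr' ?_)
    filter_upwards [hev] with t ht
    have hI : ∀ i, IntervalIntegrable (fun ξ => ∑ j, ((X ξ)ᴴ * B₁ ξ * X ξ) i j * v j)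
        volume c t := fun i => by
      have := IntervalIntegrable.sum Finset.univ
        (fun j (_ : j ∈ Finset.univ) => (hMint i j t ht).mul_const (v j))
      simpa [Finset.sum_fn] using this
    have hI2 : IntervalIntegrable
        (fun ξ => ∑ i, star (v i) * ∑ j, ((X ξ)ᴴ * B₁ ξ * X ξ) i j * v j) volume c t := by
      have := IntervalIntegrable.sum Finset.univ
        (fun i (_ : i ∈ Finset.univ) => (hI i).const_mul (star (v i)))
      simpa [Finset.sum_fn] using this
    have e : (∑ i, star (v i) * ∑ j, (∫ ξ in c..t, ((X ξ)ᴴ * B₁ ξ * X ξ) i j) * v j)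
        = ∫ ξ in c..t, ∑ i, star (v i) * ∑ j, ((X ξ)ᴴ * B₁ ξ * X ξ) i j * v j := by
      rw [intervalIntegral.integral_finsetSum fun i _ => (hI i).const_mul _]
      refine Finset.sum_congr rfl fun i _ => ?_
      rw [intervalIntegral.integral_const_mul,
        intervalIntegral.integral_finsetSum fun j _ => (hMint i j t ht).mul_const _]
      simp only [intervalIntegral.integral_mul_const]
    rw [e]
    have e2 : (∫ ξ in c..t, ∑ i, star (v i) * ∑ j, ((X ξ)ᴴ * B₁ ξ * X ξ) i j * v j).re
        = ∫ ξ in c..t, (∑ i, star (v i) * ∑ j, ((X ξ)ᴴ * B₁ ξ * X ξ) i j * v j).re := by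
      have := Complex.reCLM.intervalIntegral_comp_comm hI2
      simpa only [Complex.reCLM_apply] using this.symm
    rw [e2]
    congr 1
    ext ξ
    congr 1
    have e3 : (∑ i, star (v i) * ∑ j, ((X ξ)ᴴ * B₁ ξ * X ξ) i j * v j)
        = star v ⬝ᵥ (((X ξ)ᴴ * B₁ ξ * X ξ) *ᵥ v) := rfl
    rw [e3, Matrix.star_mulVec, ← Matrix.dotProduct_mulVec, Matrix.mulVec_mulVec,
      Matrix.mulVec_mulVec, Matrix.mul_assoc]
  rw [Complex.lt_def]
  exact ⟨by rw [hre]; exact hL, by rw [him]; rfl⟩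
end
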